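/- arXiv:1802.08163 — 2 statements merged into one kernel-verified Lean document; each statement's English description precedes it below -/
import Mathlib

section
/- (The Cramér projection with p > 1 Wasserstein expands distances: counterexample underlying Lemma 1.) Let p > 1, take the grid z₁ = 0, z₂ = 1, and consider ν₁ = δ_{1/4}, ν₂ = δ_{3/4}, so Π_C ν₁ = (3/4)δ₀ + (1/4)δ₁ and Π_C ν₂ = (1/4)δ₀ + (3/4)δ₁. Then: (i) d_p(ν₁, ν₂) = 1/2, i.e. there is a coupling λ of ν₁ and ν₂ with (∫ |x−y|^p dλ)^{1/p} = 1/2 and every coupling has (∫ |x−y|^p dλ)^{1/p} ≥ 1/2; (ii) every coupling λ' of Π_C ν₁ and Π_C ν₂ satisfies (∫ |x−y|^p dλ')^{1/p} ≥ 2^{−1/p}; and (iii) 2^{−1/p} > 1/2. Hence Π_C is not a non-expansion, and the projected Bellman operator Π_C T^π is in general not a contraction, in d_p for p > 1. -/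
open MeasureTheory Filter Set

noncomputable section

/-- The cumulative distribution function of a measure on ℝ. -/
def cdfFn (ν : Measure ℝ) (y : ℝ) : ℝ := (ν (Set.Iic y)).toReal

/-- The Cramér distance `ℓ₂` between two measures on ℝ. -/
def cramerDist (ν₁ ν₂ : Measure ℝ) : ℝ :=
  Real.sqrt (∫ x, (cdfFn ν₁ x - cdfFn ν₂ x) ^ 2)

/-- The hat functions associated with the grid `z 0 < z 1 < ⋯ < z (K-1)`. -/
def hatFn (K : ℕ) (z : ℕ → ℝ) (i : ℕ) (x : ℝ) : ℝ :=
  if i = 0 ∧ x ≤ z 0 then 1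
  else if i = K - 1 ∧ z (K - 1) ≤ x then 1
  else if i + 1 < K ∧ z i ≤ x ∧ x ≤ z (i + 1) then (z (i + 1) - x) / (z (i + 1) - z i)
  else if 0 < i ∧ z (i - 1) ≤ x ∧ x ≤ z i then (x - z (i - 1)) / (z i - z (i - 1))
  else 0

/-- The Cramér projection onto the grid `z 0 < z 1 < ⋯ < z (K-1)`. -/
def cramerProj (K : ℕ) (z : ℕ → ℝ) (ν : Measure ℝ) : Measure ℝ :=
  ∑ i ∈ Finset.range K, (ENNReal.ofReal (∫ w, hatFn K z i w ∂ν)) • Measure.dirac (z i)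

/-- The distributional Bellman operator. -/
def bellmanOp {X A : Type} [Fintype X] [Fintype A] [MeasurableSpace X] [MeasurableSpace A]
    (γ : ℝ) (p : X × A → Measure (ℝ × X)) (pol : X → Measure A)
    (η : X × A → Measure ℝ) (xa : X × A) : Measure ℝ :=
  (p xa).bind (fun rx' => ∑ a' : A, (pol rx'.2 {a'}) • (η (rx'.2, a')).map (fun t => rx'.1 + γ * t))

/-- The supremum-Cramér metric between return distribution functions. -/
def supCramer {X A : Type} [Fintype X] [Fintype A] (η μ : X × A → Measure ℝ) : ℝ :=
  ⨆ xa : X × A, cramerDist (η xa) (μ xa)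

/-- Square-integrable tails of the CDF. -/
def sqIntTails (ν : Measure ℝ) : Prop :=
  IntegrableOn (fun x => (cdfFn ν x) ^ 2) (Set.Iic 0) ∧
  IntegrableOn (fun x => (1 - cdfFn ν x) ^ 2) (Set.Ici 0)

/-!
Two Dirac masses have a single coupling, so `d_p(δ_{1/4}, δ_{3/4}) = 1/2`. After projection the
mass at `1` grows from `1/4` to `3/4`, so every coupling must move mass at least `1/2` from one grid
point to the other. All of this mass travels the full distance `1`, whose `p`-th power is still `1`,
so the cost is at least `1/2` and the distance at least `2^{-1/p}`, which exceeds `1/2` because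
`p > 1`.
-/

section CramerProj

variable {K : ℕ} {z : ℕ → ℝ} {i j : ℕ} {x : ℝ}

theorem hatFn_of_mem_Icc_right (hj : j + 1 < K) (hz : z j < z (j + 1))
    (hx : x ∈ Icc (z j) (z (j + 1))) :
    hatFn K z j x = (z (j + 1) - x) / (z (j + 1) - z j) := by
  have hne : z (j + 1) - z j ≠ 0 := sub_ne_zero.2 hz.ne'
  grind [hatFn]

-- At `x = z (j + 1)` an earlier branch of `hatFn` applies; it also yields the value `1`.
theorem hatFn_of_mem_Icc_left (hz : StrictMonoOn z (Iio K)) (hj : j + 1 < K)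
    (hx : x ∈ Icc (z j) (z (j + 1))) :
    hatFn K z (j + 1) x = (x - z j) / (z (j + 1) - z j) := by
  have hlt : z j < z (j + 1) := hz (Nat.lt_of_succ_lt hj) hj (Nat.lt_succ_self j)
  have hne : z (j + 1) - z j ≠ 0 := sub_ne_zero.2 hlt.ne'
  have hlt' (h : j + 2 < K) : z (j + 1) < z (j + 2) := hz hj h (Nat.lt_succ_self _)
  grind [hatFn]

theorem hatFn_eq_zero (hz : StrictMonoOn z (Iio K)) (hi : i < K) (hj : j + 1 < K)
    (hx : x ∈ Icc (z j) (z (j + 1))) (hij : i ≠ j) (hij' : i ≠ j + 1) : hatFn K z i x = 0 := by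
  obtain h | h : i < j ∨ j + 1 < i := by lia
  · have hlt : z i < x := (hz hi (by grind) h).trans_le hx.1
    have hle : z (i + 1) ≤ x := (hz.monotoneOn (by grind) (by grind) h).trans hx.1
    grind [hatFn]
  · have hlt : x < z i := hx.2.trans_lt (hz hj hi h)
    have hle : x ≤ z (i - 1) := hx.2.trans (hz.monotoneOn hj (by grind) (by lia))
    grind [hatFn]

theorem cramerProj_dirac (hz : StrictMonoOn z (Iio K)) (hj : j + 1 < K)
    (hx : x ∈ Icc (z j) (z (j + 1))) :
    cramerProj K z (Measure.dirac x) =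
      ENNReal.ofReal ((z (j + 1) - x) / (z (j + 1) - z j)) • Measure.dirac (z j) +
        ENNReal.ofReal ((x - z j) / (z (j + 1) - z j)) • Measure.dirac (z (j + 1)) := by
  have hjK : j < K := Nat.lt_of_succ_lt hj
  have hlt : z j < z (j + 1) := hz hjK hj (Nat.lt_succ_self j)
  simp only [cramerProj, integral_dirac]
  rw [Finset.sum_eq_add_of_mem j (j + 1) (Finset.mem_range.2 hjK) (Finset.mem_range.2 hj)
      (Nat.lt_succ_self j).ne, hatFn_of_mem_Icc_right hj hlt hx, hatFn_of_mem_Icc_left hz hj hx]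
  rintro i hi ⟨hij, hij'⟩
  simp [hatFn_eq_zero hz (Finset.mem_range.1 hi) hj hx hij hij']

theorem cramerProj_two_dirac {a b : ℝ} (hab : a < b) (hx : x ∈ Icc a b) :
    cramerProj 2 (fun i => if i = 0 then a else b) (Measure.dirac x) =
      ENNReal.ofReal ((b - x) / (b - a)) • Measure.dirac a +
        ENNReal.ofReal ((x - a) / (b - a)) • Measure.dirac b := by
  have hz : StrictMonoOn (fun i : ℕ => if i = 0 then a else b) (Iio 2) := by
    intro i hi j hj hij
    obtain ⟨rfl, rfl⟩ : i = 0 ∧ j = 1 := by grind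
    simpa
  simpa using cramerProj_dirac hz (j := 0) one_lt_two (by simpa using hx)

end CramerProj

section Coupling

variable {X Y : Type*} [MeasurableSpace X] [MeasurableSpace Y]

theorem eq_dirac_of_fst_snd_eq_dirac [MeasurableSingletonClass X] [MeasurableSingletonClass Y]
    {l : Measure (X × Y)} {a : X} {b : Y} (ha : l.fst = Measure.dirac a)
    (hb : l.snd = Measure.dirac b) : l = Measure.dirac (a, b) := by
  have hl : l univ = 1 := by rw [← Measure.fst_univ, ha, measure_univ]
  have hfst : ∀ᵐ q ∂l, q.1 = a :=
    ae_of_ae_map measurable_fst.aemeasurable (ha ▸ (ae_dirac_iff (measurableSet_singleton a)).2 rfl)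
  have hsnd : ∀ᵐ q ∂l, q.2 = b :=
    ae_of_ae_map measurable_snd.aemeasurable (hb ▸ (ae_dirac_iff (measurableSet_singleton b)).2 rfl)
  have hid : (id : X × Y → X × Y) =ᵐ[l] fun _ => (a, b) := by
    filter_upwards [hfst, hsnd] with q h₁ h₂ using Prod.ext h₁ h₂
  rw [← Measure.map_id (μ := l), Measure.map_congr hid, Measure.map_const, hl, one_smul]

theorem rpow_integral_dist_rpow_of_fst_snd_eq_dirac [PseudoMetricSpace X]
    [MeasurableSingletonClass X] {l : Measure (X × X)} {a b : X} {p : ℝ} (hp : p ≠ 0)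
    (ha : l.fst = Measure.dirac a) (hb : l.snd = Measure.dirac b) :
    (∫ q, dist q.1 q.2 ^ p ∂l) ^ (1 / p) = dist a b := by
  rw [eq_dirac_of_fst_snd_eq_dirac ha hb, integral_dirac, one_div,
    Real.rpow_rpow_inv dist_nonneg hp]

theorem abs_measureReal_fst_sub_snd_le (l : Measure (X × X)) [IsFiniteMeasure l] {s : Set X}
    (hs : MeasurableSet s) :
    |l.fst.real s - l.snd.real s| ≤ l.real {q | q.1 ≠ q.2} := by
  rw [Measure.fst, Measure.snd, map_measureReal_apply measurable_fst hs,
    map_measureReal_apply measurable_snd hs]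
  refine (abs_measureReal_sub_le_measureReal_symmDiff (measurable_fst hs).nullMeasurableSet
    (measurable_snd hs).nullMeasurableSet).trans (measureReal_mono ?_)
  rintro q (⟨h₁, h₂⟩ | ⟨h₂, h₁⟩) h
  · exact h₂ (by simpa [← h] using h₁)
  · exact h₁ (by simpa [h] using h₂)

theorem integral_dist_rpow_of_ae_mem_pair [MetricSpace X] [MeasurableEq X]
    {l : Measure (X × X)} {a b : X} {p : ℝ} (hp : p ≠ 0)
    (hfst : ∀ᵐ x ∂l.fst, x ∈ ({a, b} : Set X)) (hsnd : ∀ᵐ x ∂l.snd, x ∈ ({a, b} : Set X)) :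
    ∫ q, dist q.1 q.2 ^ p ∂l = dist a b ^ p * l.real {q | q.1 ≠ q.2} := by
  have hmeas : MeasurableSet {q : X × X | q.1 ≠ q.2} :=
    (measurableSet_eq_fun measurable_fst measurable_snd).compl
  have hcost : (fun q : X × X => dist q.1 q.2 ^ p) =ᵐ[l]
      {q | q.1 ≠ q.2}.indicator fun _ => dist a b ^ p := by
    filter_upwards [ae_of_ae_map measurable_fst.aemeasurable hfst,
      ae_of_ae_map measurable_snd.aemeasurable hsnd] with ⟨x, y⟩ hx hy
    obtain rfl | hxy := eq_or_ne x y
    · simp [hp]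
    · have hdist : dist x y = dist a b := by grind [dist_comm]
      simp [hxy, hdist]
  rw [integral_congr_ae hcost, integral_indicator_const _ hmeas, smul_eq_mul, mul_comm]

theorem ae_smul_dirac_add_smul_dirac_mem_pair [MeasurableSingletonClass X] (a b : X)
    (c d : ENNReal) :
    ∀ᵐ x ∂(c • Measure.dirac a + d • Measure.dirac b), x ∈ ({a, b} : Set X) := by
  rw [ae_add_measure_iff]
  constructor <;> refine Measure.ae_smul_measure ?_ _ <;> simp [ae_dirac_eq]

theorem dist_rpow_mul_abs_sub_le_integral_dist_rpow [MetricSpace X] [MeasurableEq X]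
    {l : Measure (X × X)} [IsFiniteMeasure l] {a b : X} (hab : a ≠ b) {p : ℝ} (hp : p ≠ 0)
    {c d c' d' : ENNReal}
    (hfst : l.fst = c • Measure.dirac a + d • Measure.dirac b)
    (hsnd : l.snd = c' • Measure.dirac a + d' • Measure.dirac b) :
    dist a b ^ p * |d.toReal - d'.toReal| ≤ ∫ q, dist q.1 q.2 ^ p ∂l := by
  have hd : l.fst.real {b} = d.toReal := by simp [hfst, measureReal_def, hab]
  have hd' : l.snd.real {b} = d'.toReal := by simp [hsnd, measureReal_def, hab]
  rw [integral_dist_rpow_of_ae_mem_pair hp (hfst ▸ ae_smul_dirac_add_smul_dirac_mem_pair a b c d)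
    (hsnd ▸ ae_smul_dirac_add_smul_dirac_mem_pair a b c' d'), ← hd, ← hd']
  gcongr
  exact abs_measureReal_fst_sub_snd_le l (measurableSet_singleton b)

end Coupling

/-- The Cramér projection expands p-Wasserstein distances for p > 1:
the counterexample on the grid z₁ = 0 < z₂ = 1 with ν₁ = δ_{1/4}, ν₂ = δ_{3/4}. -/
theorem cramerProj_wasserstein_expansion
    (p : ℝ) (hp : 1 < p) :
    -- the projections have the claimed explicit form
    (cramerProj 2 (fun i => if i = 0 then (0 : ℝ) else 1) (Measure.dirac (1 / 4 : ℝ))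
        = ENNReal.ofReal (3 / 4) • Measure.dirac (0 : ℝ)
          + ENNReal.ofReal (1 / 4) • Measure.dirac (1 : ℝ)) ∧
    (cramerProj 2 (fun i => if i = 0 then (0 : ℝ) else 1) (Measure.dirac (3 / 4 : ℝ))
        = ENNReal.ofReal (1 / 4) • Measure.dirac (0 : ℝ)
          + ENNReal.ofReal (3 / 4) • Measure.dirac (1 : ℝ)) ∧
    -- (i) d_p(ν₁, ν₂) = 1/2 : attained by some coupling, and a lower bound over all couplings
    (∃ l : Measure (ℝ × ℝ), IsProbabilityMeasure l ∧
        l.map Prod.fst = Measure.dirac (1 / 4 : ℝ) ∧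
        l.map Prod.snd = Measure.dirac (3 / 4 : ℝ) ∧
        (∫ q : ℝ × ℝ, |q.1 - q.2| ^ p ∂l) ^ (1 / p) = 1 / 2) ∧
    (∀ l : Measure (ℝ × ℝ), IsProbabilityMeasure l →
        l.map Prod.fst = Measure.dirac (1 / 4 : ℝ) →
        l.map Prod.snd = Measure.dirac (3 / 4 : ℝ) →
        (1 : ℝ) / 2 ≤ (∫ q : ℝ × ℝ, |q.1 - q.2| ^ p ∂l) ^ (1 / p)) ∧
    -- (ii) every coupling of the projected measures has p-cost at least 2^{-1/p}
    (∀ l' : Measure (ℝ × ℝ), IsProbabilityMeasure l' →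
        l'.map Prod.fst
          = cramerProj 2 (fun i => if i = 0 then (0 : ℝ) else 1) (Measure.dirac (1 / 4 : ℝ)) →
        l'.map Prod.snd
          = cramerProj 2 (fun i => if i = 0 then (0 : ℝ) else 1) (Measure.dirac (3 / 4 : ℝ)) →
        (2 : ℝ) ^ (-(1 / p)) ≤ (∫ q : ℝ × ℝ, |q.1 - q.2| ^ p ∂l') ^ (1 / p)) ∧
    -- (iii) 2^{-1/p} > 1/2
    ((1 : ℝ) / 2 < (2 : ℝ) ^ (-(1 / p))) := by
  have hp₀ : 0 < p := one_pos.trans hp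
  have hproj₁ := cramerProj_two_dirac (x := 1 / 4) one_pos (by norm_num)
  have hproj₂ := cramerProj_two_dirac (x := 3 / 4) one_pos (by norm_num)
  norm_num only at hproj₁ hproj₂
  have hdirac {l : Measure (ℝ × ℝ)} (hfst : l.fst = Measure.dirac (1 / 4))
      (hsnd : l.snd = Measure.dirac (3 / 4)) :
      (∫ q : ℝ × ℝ, |q.1 - q.2| ^ p ∂l) ^ (1 / p) = 1 / 2 :=
    (rpow_integral_dist_rpow_of_fst_snd_eq_dirac hp₀.ne' hfst hsnd).trans
      (by norm_num [Real.dist_eq, abs_of_neg])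
  refine ⟨hproj₁, hproj₂, ⟨Measure.dirac (1 / 4, 3 / 4), inferInstance, Measure.map_dirac _,
    Measure.map_dirac _, hdirac (Measure.map_dirac _) (Measure.map_dirac _)⟩,
    fun l _ hfst hsnd => (hdirac hfst hsnd).ge, ?_, ?_⟩
  · intro l _ hfst hsnd
    have hlow : 1 / 2 ≤ ∫ q : ℝ × ℝ, |q.1 - q.2| ^ p ∂l := calc
      (1 : ℝ) / 2 = dist (0 : ℝ) 1 ^ p *
          |(ENNReal.ofReal (1 / 4)).toReal - (ENNReal.ofReal (3 / 4)).toReal| := by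
        norm_num [abs_of_neg]
      _ ≤ _ := dist_rpow_mul_abs_sub_le_integral_dist_rpow zero_ne_one hp₀.ne'
        (hfst.trans hproj₁) (hsnd.trans hproj₂)
    rw [Real.rpow_neg zero_le_two, ← Real.inv_rpow zero_le_two, ← one_div (2 : ℝ)]
    gcongr
  · rw [one_div, ← Real.rpow_neg_one]
    exact Real.rpow_lt_rpow_of_exponent_lt one_lt_two (neg_lt_neg ((div_lt_one hp₀).2 hp))

end
end

section
/- Let z₁ < ⋯ < z_K (K ≥ 2) be a grid with Cramér projection Π_C, and let ν be any probability measure on ℝ with CDF F_ν. Then the CDF F_{Π_C ν} of Π_C ν satisfies F_{Π_C ν}(z_i) = (1/(z_{i+1}−z_i)) ∫_{z_i}^{z_{i+1}} F_ν(w) dw for each i = 1,…,K−1, and F_{Π_C ν}(z_K) = 1. -/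
open MeasureTheory Filter Set

noncomputable section

/-! The hat functions telescope: `h_0 + ⋯ + h_i` is the ramp `r_i` falling from `1` to `0` over
`[z i, z (i + 1)]`, or the constant `1` when `z i` is the last grid point. Hence the projected
measure gives `(-∞, z i]` the mass `∫ r_i dν`. For `0 < t ≤ 1` the set `{t ≤ r_i}` is a half-line
`(-∞, w]` whose endpoint `w` is affine in `t` and sweeps `[z i, z (i + 1)]`, so the layer-cake
formula turns this integral into the average of the CDF of `ν` over `[z i, z (i + 1)]`. -/

/-- The function equal to `1` left of `a`, to `0` right of `b`, and affine in between (for `a < b`).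
The partial sums of the hat functions have this form. -/
def ramp (a b x : ℝ) : ℝ := max 0 (min 1 ((b - x) / (b - a)))

/-- The sum of the hat functions at `z 0, …, z i`: a ramp over `[z i, z (i + 1)]`, or the constant
`1` when `z i` is the last grid point. -/
def gridRamp (K : ℕ) (z : ℕ → ℝ) (i : ℕ) (x : ℝ) : ℝ :=
  if i + 1 < K then ramp (z i) (z (i + 1)) x else 1

section Ramp

variable {a b x : ℝ}

lemma ramp_mem_Icc (a b x : ℝ) : ramp a b x ∈ Icc 0 1 :=
  ⟨le_max_left _ _, max_le zero_le_one (min_le_left _ _)⟩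

lemma ramp_of_le (hab : a < b) (hx : x ≤ a) : ramp a b x = 1 := by
  have hq : 1 ≤ (b - x) / (b - a) := (one_le_div (sub_pos.2 hab)).2 (by linarith)
  rw [ramp, min_eq_left hq, max_eq_right zero_le_one]

lemma ramp_of_ge (hab : a ≤ b) (hx : b ≤ x) : ramp a b x = 0 := by
  have hq : (b - x) / (b - a) ≤ 0 :=
    div_nonpos_of_nonpos_of_nonneg (sub_nonpos.2 hx) (sub_nonneg.2 hab)
  exact max_eq_left ((min_le_right _ _).trans hq)

lemma ramp_of_mem_Icc (hx : x ∈ Icc a b) : ramp a b x = (b - x) / (b - a) := by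
  have hab : 0 ≤ b - a := sub_nonneg.2 (hx.1.trans hx.2)
  have hq₀ : 0 ≤ (b - x) / (b - a) := div_nonneg (sub_nonneg.2 hx.2) hab
  have hq₁ : (b - x) / (b - a) ≤ 1 := div_le_one_of_le₀ (by linarith [hx.1]) hab
  rw [ramp, min_eq_right hq₁, max_eq_right hq₀]

lemma measurable_ramp (a b : ℝ) : Measurable (ramp a b) := by
  unfold ramp
  fun_prop

lemma setOf_le_ramp (hab : a < b) {t : ℝ} (ht : t ∈ Ioc 0 1) :
    {x | t ≤ ramp a b x} = Iic (b - (b - a) * t) := by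
  ext x
  have hq : t ≤ (b - x) / (b - a) ↔ x ≤ b - (b - a) * t := by
    rw [le_div_iff₀ (sub_pos.2 hab), le_sub_comm, mul_comm]
  simp only [ramp, mem_ofPred_eq, mem_Iic, le_max_iff, le_min_iff, ht.1.not_ge, ht.2, hq,
    false_or, true_and]

lemma integral_ramp (hab : a < b) (ν : Measure ℝ) [IsFiniteMeasure ν] :
    ∫ x, ramp a b x ∂ν = 1 / (b - a) * ∫ w in a..b, cdfFn ν w := by
  have hint : Integrable (ramp a b) ν :=
    .of_mem_Icc 0 1 (measurable_ramp a b).aemeasurable (ae_of_all _ (ramp_mem_Icc a b))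
  calc ∫ x, ramp a b x ∂ν
      = ∫ t in Ioc 0 1, ν.real {x | t ≤ ramp a b x} :=
        hint.integral_eq_integral_Ioc_meas_le (ae_of_all _ fun x => (ramp_mem_Icc a b x).1)
          (ae_of_all _ fun x => (ramp_mem_Icc a b x).2)
    _ = ∫ t in Ioc 0 1, cdfFn ν (b - (b - a) * t) :=
        setIntegral_congr_fun measurableSet_Ioc fun t ht => by
          simp only [setOf_le_ramp hab ht, cdfFn, Measure.real]
    _ = ∫ t in (0 : ℝ)..1, cdfFn ν (b - (b - a) * t) :=
        (intervalIntegral.integral_of_le zero_le_one).symm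
    _ = 1 / (b - a) * ∫ w in a..b, cdfFn ν w := by
        rw [intervalIntegral.integral_comp_sub_mul _ (sub_pos.2 hab).ne', smul_eq_mul, one_div]
        simp only [mul_one, mul_zero, sub_sub_cancel, sub_zero]

end Ramp

section HatFn

variable (K : ℕ) (z : ℕ → ℝ) (i : ℕ)

lemma hatFn_mem_Icc (x : ℝ) : hatFn K z i x ∈ Icc 0 1 := by
  unfold hatFn
  split_ifs with _ _ hright hleft
  · exact ⟨zero_le_one, le_rfl⟩
  · exact ⟨zero_le_one, le_rfl⟩
  · obtain ⟨-, hx, hx'⟩ := hright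
    exact ⟨div_nonneg (by linarith) (by linarith), div_le_one_of_le₀ (by linarith) (by linarith)⟩
  · obtain ⟨-, hx, hx'⟩ := hleft
    exact ⟨div_nonneg (by linarith) (by linarith), div_le_one_of_le₀ (by linarith) (by linarith)⟩
  · exact ⟨le_rfl, zero_le_one⟩

lemma measurable_hatFn : Measurable (hatFn K z i) := by
  unfold hatFn
  refine .ite ?_ measurable_const <| .ite ?_ measurable_const <|
    .ite ?_ (by fun_prop) <| .ite ?_ (by fun_prop) measurable_const
  all_goals measurability

lemma integrable_hatFn (ν : Measure ℝ) [IsFiniteMeasure ν] : Integrable (hatFn K z i) ν :=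
  .of_mem_Icc 0 1 (measurable_hatFn K z i).aemeasurable (ae_of_all _ (hatFn_mem_Icc K z i))

end HatFn

lemma cdfFn_cramerProj (K : ℕ) (z : ℕ → ℝ) (ν : Measure ℝ) (y : ℝ) :
    cdfFn (cramerProj K z ν) y = ∑ j ∈ Finset.range K with z j ≤ y, ∫ w, hatFn K z j w ∂ν := by
  have hnonneg (j : ℕ) : 0 ≤ ∫ w, hatFn K z j w ∂ν :=
    integral_nonneg fun w => (hatFn_mem_Icc K z j w).1
  have hmass : cramerProj K z ν (Iic y)
      = ∑ j ∈ Finset.range K with z j ≤ y, ENNReal.ofReal (∫ w, hatFn K z j w ∂ν) := by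
    simp only [cramerProj, Measure.finsetSum_apply, Measure.smul_apply, measurableSet_Iic,
      Measure.dirac_apply', indicator_apply, mem_Iic, Pi.one_apply, smul_eq_mul, mul_ite, mul_one,
      mul_zero, Finset.sum_filter]
  rw [cdfFn, hmass, ← ENNReal.ofReal_sum_of_nonneg fun j _ => hnonneg j,
    ENNReal.toReal_ofReal (Finset.sum_nonneg fun j _ => hnonneg j)]

section Grid

variable {K : ℕ} {z : ℕ → ℝ} (hz : ∀ i, i + 1 < K → z i < z (i + 1)) {i : ℕ}

include hz

lemma strictMonoOn_grid : StrictMonoOn z (Iio K) :=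
  strictMonoOn_of_lt_add_one ordConnected_Iio fun i _ _ hi => hz i hi

lemma filter_grid_le (hi : i < K) : {j ∈ Finset.range K | z j ≤ z i} = Finset.range (i + 1) := by
  ext j
  simp only [Finset.mem_filter, Finset.mem_range, Nat.lt_succ_iff]
  constructor
  · rintro ⟨hj, hji⟩
    exact ((strictMonoOn_grid hz).le_iff_le hj hi).1 hji
  · intro hji
    exact ⟨hji.trans_lt hi, (strictMonoOn_grid hz).monotoneOn (hji.trans_lt hi) hi hji⟩

lemma gridRamp_of_le {x : ℝ} (hx : x ≤ z i) : gridRamp K z i x = 1 := by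
  unfold gridRamp
  split_ifs with hi
  · exact ramp_of_le (hz i hi) hx
  · rfl

lemma hatFn_of_ge (hi : i < K) {x : ℝ} (hx : z i ≤ x) : hatFn K z i x = gridRamp K z i x := by
  by_cases hleft : i = 0 ∧ x ≤ z 0
  · rw [hatFn, if_pos hleft, gridRamp_of_le hz (hleft.1 ▸ hleft.2)]
  rw [hatFn, if_neg hleft]
  rcases Nat.lt_or_ge (i + 1) K with hi' | hi'
  · rw [gridRamp, if_pos hi', if_neg fun h => by omega]
    rcases le_or_gt x (z (i + 1)) with hx' | hx'
    · rw [if_pos ⟨hi', hx, hx'⟩, ramp_of_mem_Icc ⟨hx, hx'⟩]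
    · have hzx : z i < x := (hz i hi').trans hx'
      rw [if_neg fun h => hx'.not_ge h.2.2, if_neg fun h => hzx.not_ge h.2.2,
        ramp_of_ge (hz i hi').le hx'.le]
  · have hlast : i = K - 1 := by omega
    rw [gridRamp, if_neg hi'.not_gt, if_pos ⟨hlast, hlast ▸ hx⟩]

lemma hatFn_succ_of_le (hi : i + 1 < K) {x : ℝ} (hx : x ≤ z (i + 1)) :
    hatFn K z (i + 1) x = 1 - ramp (z i) (z (i + 1)) x := by
  rcases hx.eq_or_lt with rfl | hx'
  · rw [hatFn_of_ge hz hi le_rfl, gridRamp_of_le hz le_rfl, ramp_of_ge (hz i hi).le le_rfl,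
      sub_zero]
  have hright : ¬ (i + 1 = K - 1 ∧ z (K - 1) ≤ x) := fun ⟨hlast, hle⟩ => hx'.not_ge (hlast ▸ hle)
  rw [hatFn, if_neg fun h => i.succ_ne_zero h.1, if_neg hright, if_neg fun h => hx'.not_ge h.2.1,
    Nat.add_sub_cancel]
  rcases le_or_gt (z i) x with hzx | hzx
  · have hd : z (i + 1) - z i ≠ 0 := (sub_pos.2 (hz i hi)).ne'
    rw [if_pos ⟨i.succ_pos, hzx, hx⟩, ramp_of_mem_Icc ⟨hzx, hx⟩, one_sub_div hd,
      sub_sub_sub_cancel_left]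
  · rw [if_neg fun h => hzx.not_ge h.2.1, ramp_of_le (hz i hi) hzx.le, sub_self]

lemma hatFn_zero (hK : 0 < K) (x : ℝ) : hatFn K z 0 x = gridRamp K z 0 x := by
  rcases le_total x (z 0) with hx | hx
  · rw [gridRamp_of_le hz hx, hatFn, if_pos ⟨rfl, hx⟩]
  · exact hatFn_of_ge hz hK hx

lemma hatFn_succ (hi : i + 1 < K) (x : ℝ) :
    hatFn K z (i + 1) x = gridRamp K z (i + 1) x - gridRamp K z i x := by
  have hramp : gridRamp K z i x = ramp (z i) (z (i + 1)) x := if_pos hi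
  rcases le_total x (z (i + 1)) with hx | hx
  · rw [hramp, gridRamp_of_le hz hx, hatFn_succ_of_le hz hi hx]
  · rw [hramp, ramp_of_ge (hz i hi).le hx, sub_zero, hatFn_of_ge hz hi hx]

lemma sum_hatFn (hi : i < K) (x : ℝ) :
    ∑ j ∈ Finset.range (i + 1), hatFn K z j x = gridRamp K z i x := by
  induction i with
  | zero => rw [zero_add, Finset.sum_range_one, hatFn_zero hz hi]
  | succ n ih =>
    rw [Finset.sum_range_succ, ih (Nat.lt_of_succ_lt hi), hatFn_succ hz hi, add_sub_cancel]

lemma cdfFn_cramerProj_grid (ν : Measure ℝ) [IsFiniteMeasure ν] (hi : i < K) :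
    cdfFn (cramerProj K z ν) (z i) = ∫ x, gridRamp K z i x ∂ν := by
  rw [cdfFn_cramerProj, filter_grid_le hz hi,
    ← integral_finsetSum _ fun j _ => integrable_hatFn K z j ν]
  simp only [sum_hatFn hz hi]

end Grid

theorem cramerProj_cdf_characterisation_general
    (K : ℕ) (hK : 0 < K) (z : ℕ → ℝ) (hz : ∀ i, i + 1 < K → z i < z (i + 1))
    (ν : Measure ℝ) [IsFiniteMeasure ν] :
    (∀ i, i + 1 < K →
      cdfFn (cramerProj K z ν) (z i)
        = (1 / (z (i + 1) - z i)) * ∫ w in (z i)..(z (i + 1)), cdfFn ν w) ∧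
    cdfFn (cramerProj K z ν) (z (K - 1)) = ν.real univ := by
  refine ⟨fun i hi => ?_, ?_⟩
  · have hramp : gridRamp K z i = ramp (z i) (z (i + 1)) := funext fun _ => if_pos hi
    rw [cdfFn_cramerProj_grid hz ν (Nat.lt_of_succ_lt hi), hramp, integral_ramp (hz i hi)]
  · have hone : gridRamp K z (K - 1) = fun _ => 1 := funext fun _ => if_neg (by omega)
    rw [cdfFn_cramerProj_grid hz ν (Nat.sub_one_lt_of_lt hK), hone, integral_const, smul_eq_mul,
      mul_one]

/-- The CDF of the Cramér projection of ν at z_i equals the average of the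
CDF of ν over [z_i, z_{i+1}], and equals 1 at z_K. -/
theorem cramerProj_cdf_characterisation
    (K : ℕ) (hK : 2 ≤ K) (z : ℕ → ℝ) (hz : ∀ i, i + 1 < K → z i < z (i + 1))
    (ν : Measure ℝ) [IsProbabilityMeasure ν] :
    (∀ i, i + 1 < K →
      cdfFn (cramerProj K z ν) (z i)
        = (1 / (z (i + 1) - z i)) * ∫ w in (z i)..(z (i + 1)), cdfFn ν w) ∧
    cdfFn (cramerProj K z ν) (z (K - 1)) = 1 := by
  simpa only [probReal_univ] using
    cramerProj_cdf_characterisation_general K (Nat.zero_lt_of_lt hK) z hz ν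

end
end
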